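/- Suppose X is a trivial strongly minimal set in a saturated model of a complete stable first-order theory. Given a tuple a = (a_1, …, a_n) ∈ X^n, the partial n-type Σ(x_1, …, x_n) := ⋃_{i,j ≤ n} tp(a_i, a_j) has only finitely many completions: there exist finitely many complete n-types q_1(x), …, q_N(x) such that every b ∈ X^n realizing Σ realizes q_ℓ for some ℓ ≤ N. -/

import Mathlib

/-!
Statement 2 (Lemma on trivial strongly minimal sets).

We work in Mathlib's first-order framework.  The ambient saturated model is an
`L`-structure `M` (a model of its own complete theory `Th(M)`; completeness is
automatic).  Saturation is expressed as: every finitely satisfiable set of formulas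
in one free variable over a parameter set of cardinality `< |M|` is realized in `M`.
Stability of the (complete) theory of `M` is expressed as the failure of the order
property.  The strongly minimal set `X` is given by a formula `χ` in one free
variable; strong minimality says `X` is infinite and every subset of `X` definable
with parameters is finite or cofinite in `X`.  `acl` is the usual model-theoretic
algebraic closure, and triviality says `a ∈ acl(A)` implies `a ∈ acl(b)` for some
single `b ∈ A`, for `a` in `X` and `A ⊆ X`.

Since `M` is saturated, complete `n`-types over `∅` (consistent with `Th(M)`) are
exactly the types `tp(c)` of tuples `c ∈ M^n`, so the finitely many completions
`q₁, …, q_N` of the partial type `Σ = ⋃_{i,j} tp(aᵢ, aⱼ)` are represented by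
realizing tuples; `b ⊨ Σ` means every formula true of `(aᵢ, aⱼ)` is true of
`(bᵢ, bⱼ)`, and `b ⊨ qₗ` means `b` has the same complete type as the tuple
representing `qₗ`.
-/

open FirstOrder

/-- `a` belongs to the model-theoretic algebraic closure of the set `A ⊆ M`:
some formula with parameters from `A`, having only finitely many solutions,
is satisfied by `a`. -/
def InAcl (L : FirstOrder.Language) (M : Type) [L.Structure M] (A : Set M) (a : M) : Prop :=
  ∃ (k : ℕ) (φ : L.Formula (Fin k ⊕ Fin 1)) (p : Fin k → M),
    (∀ i, p i ∈ A) ∧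
    {x : M | φ.Realize (Sum.elim p (fun _ => x))}.Finite ∧
    φ.Realize (Sum.elim p (fun _ => a))

/-- The definable set given by `χ` is strongly minimal: it is infinite and every
subset of it definable with parameters is finite or cofinite. -/
def StronglyMinimalFormula (L : FirstOrder.Language) (M : Type) [L.Structure M]
    (χ : L.Formula (Fin 1)) : Prop :=
  {m : M | χ.Realize (fun _ => m)}.Infinite ∧
  ∀ (k : ℕ) (φ : L.Formula (Fin k ⊕ Fin 1)) (p : Fin k → M),
    {x : M | χ.Realize (fun _ => x) ∧ φ.Realize (Sum.elim p (fun _ => x))}.Finite ∨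
    {x : M | χ.Realize (fun _ => x) ∧ ¬ φ.Realize (Sum.elim p (fun _ => x))}.Finite

/-- Triviality of the strongly minimal set given by `χ`: for `a` in `X` and `A ⊆ X`,
`a ∈ acl(A)` implies `a ∈ acl(b)` for some single element `b ∈ A`. -/
def TrivialFormula (L : FirstOrder.Language) (M : Type) [L.Structure M]
    (χ : L.Formula (Fin 1)) : Prop :=
  ∀ a : M, χ.Realize (fun _ => a) →
    ∀ A : Set M, A ⊆ {m : M | χ.Realize (fun _ => m)} →
      InAcl L M A a → ∃ b ∈ A, InAcl L M ({b} : Set M) a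

/-- `M` is a saturated model: every finitely satisfiable collection of formulas in one
free variable, with parameters indexed by a set of cardinality `< |M|`, is realized. -/
def SaturatedModel (L : FirstOrder.Language) (M : Type) [L.Structure M] : Prop :=
  ∀ (α : Type) (p : α → M), Cardinal.mk α < Cardinal.mk M →
    ∀ Φ : Set (L.Formula (α ⊕ Fin 1)),
      (∀ Φ₀ : Finset (L.Formula (α ⊕ Fin 1)), ↑Φ₀ ⊆ Φ →
        ∃ x : M, ∀ φ ∈ Φ₀, φ.Realize (Sum.elim p (fun _ => x))) →
      ∃ x : M, ∀ φ ∈ Φ, φ.Realize (Sum.elim p (fun _ => x))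

/-- The (complete) theory of `M` has the order property. -/
def HasOrderProperty (L : FirstOrder.Language) (M : Type) [L.Structure M] : Prop :=
  ∃ (k m : ℕ) (φ : L.Formula (Fin k ⊕ Fin m)) (a : ℕ → Fin k → M) (b : ℕ → Fin m → M),
    ∀ i j : ℕ, φ.Realize (Sum.elim (a i) (b j)) ↔ i ≤ j

/-- The complete theory of `M` is stable: it does not have the order property. -/
def StableModel (L : FirstOrder.Language) (M : Type) [L.Structure M] : Prop :=
  ¬ HasOrderProperty L M

namespace TrivSM

open FirstOrder FirstOrder.Language

/-- there are `m` distinct solutions of `ψ(v, ·)`. -/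
theorem exists_count {L : FirstOrder.Language} {M : Type} [L.Structure M] {α : Type}
    (ψ : L.Formula (α ⊕ Fin 1)) (m : ℕ) :
    ∃ σ : L.Formula α, ∀ v : α → M, σ.Realize v ↔
      ∃ x : Fin m → M, Function.Injective x ∧ ∀ i, ψ.Realize (Sum.elim v (fun _ => x i)) := by
  classical
  let A : L.Formula (α ⊕ Fin m) :=
    BoundedFormula.iInf fun i : Fin m => (ψ.relabel (Sum.map id (fun _ => i)) : L.Formula (α ⊕ Fin m))
  let B : L.Formula (α ⊕ Fin m) :=
    BoundedFormula.iInf fun ij : {ij : Fin m × Fin m // ij.1 ≠ ij.2} =>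
      ∼((Term.var (Sum.inr ij.1.1) : L.Term (α ⊕ Fin m)).equal (Term.var (Sum.inr ij.1.2)))
  refine ⟨Formula.iExs (Fin m) (A ⊓ B), fun v => ?_⟩
  rw [Formula.realize_iExs]
  refine exists_congr fun x => ?_
  have hA : A.Realize (Sum.elim v x) ↔ ∀ i, ψ.Realize (Sum.elim v (fun _ => x i)) := by
    simp only [A, Formula.Realize, BoundedFormula.realize_iInf]
    refine forall_congr' fun i => ?_
    have := Formula.realize_relabel (M := M) (φ := ψ) (g := (Sum.map id (fun _ => i) : α ⊕ Fin 1 → α ⊕ Fin m)) (v := Sum.elim v x)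
    rw [Sum.elim_comp_map] at this
    exact this
  have hB : B.Realize (Sum.elim v x) ↔ Function.Injective x := by
    simp only [B, Formula.Realize, BoundedFormula.realize_iInf]
    constructor
    · intro h i j hij
      by_contra hne
      have := h ⟨(i, j), hne⟩
      rw [BoundedFormula.realize_not] at this
      exact this ((Formula.realize_equal).2 (by simpa using hij))
    · rintro h ⟨⟨i, j⟩, hne⟩
      rw [BoundedFormula.realize_not]
      intro h'
      exact hne (h (by simpa using (Formula.realize_equal (M := M)).1 h'))
  rw [Formula.realize_inf, hA, hB, and_comm]

theorem fin_transfer {L : FirstOrder.Language} {M : Type} [L.Structure M] {α : Type}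
    (ψ : L.Formula (α ⊕ Fin 1)) (v w : α → M)
    (h : ∀ φ : L.Formula α, φ.Realize v → φ.Realize w)
    (hf : {x | ψ.Realize (Sum.elim v (fun _ => x))}.Finite) :
    {x | ψ.Realize (Sum.elim w (fun _ => x))}.Finite := by
  by_contra hinf
  obtain ⟨σ, hσ⟩ := exists_count (M := M) ψ (hf.toFinset.card + 1)
  have hw : σ.Realize w := by
    rw [hσ]
    let e := Set.Infinite.natEmbedding _ hinf
    exact ⟨fun i => (e i : M), fun i j hij => Fin.ext (e.injective (Subtype.ext hij)),
      fun i => (e i).2⟩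
  have hv : σ.Realize v := by
    by_contra hn
    exact (Formula.realize_not.1 (h (∼σ) (Formula.realize_not.2 hn))) hw
  obtain ⟨x, hx, hxs⟩ := (hσ v).1 hv
  have := Finset.card_le_card_of_injOn (s := Finset.univ) (t := hf.toFinset) x
    (fun i _ => by simpa using hxs i) hx.injOn
  simp at this

theorem alg_ext {L : FirstOrder.Language} {M : Type} [L.Structure M] {α : Type}
    (ψ : L.Formula (α ⊕ Fin 1)) (v w : α → M) (d : M)
    (h : ∀ φ : L.Formula α, φ.Realize w → φ.Realize v)
    (hf : {x | ψ.Realize (Sum.elim v (fun _ => x))}.Finite)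
    (hd : ψ.Realize (Sum.elim w (fun _ => d))) :
    ∃ c, ψ.Realize (Sum.elim v (fun _ => c)) ∧ ∀ φ : L.Formula (α ⊕ Fin 1),
      φ.Realize (Sum.elim v (fun _ => c)) ↔ φ.Realize (Sum.elim w (fun _ => d)) := by
  suffices H : ∃ c, ψ.Realize (Sum.elim v (fun _ => c)) ∧ ∀ φ : L.Formula (α ⊕ Fin 1),
      φ.Realize (Sum.elim w (fun _ => d)) → φ.Realize (Sum.elim v (fun _ => c)) by
    obtain ⟨c, hc, H⟩ := H
    refine ⟨c, hc, fun φ => ⟨fun h1 => ?_, H φ⟩⟩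
    by_contra hn
    exact Formula.realize_not.1 (H (∼φ) (Formula.realize_not.2 hn)) h1
  by_contra! H
  let C := {x | ψ.Realize (Sum.elim v (fun _ => x))}
  have : Finite C := hf
  choose f hf1 hf2 using fun c : C => H c.1 c.2
  let A : L.Formula (α ⊕ Fin 1) := ψ ⊓ (BoundedFormula.iInf f : L.Formula (α ⊕ Fin 1))
  have hA : (Formula.iExs (Fin 1) A).Realize w := by
    rw [Formula.realize_iExs]
    refine ⟨fun _ => d, ?_⟩
    rw [Formula.realize_inf]
    refine ⟨hd, ?_⟩
    rw [Formula.Realize, BoundedFormula.realize_iInf]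
    exact hf1
  have hA' := h _ hA
  rw [Formula.realize_iExs] at hA'
  obtain ⟨x, hx⟩ := hA'
  have hx0 : x = fun _ => x 0 := by funext i; rw [Subsingleton.elim i 0]
  rw [hx0, Formula.realize_inf] at hx
  obtain ⟨h1, h2⟩ := hx
  rw [Formula.Realize, BoundedFormula.realize_iInf] at h2
  exact hf2 ⟨x 0, h1⟩ (h2 ⟨x 0, h1⟩)

theorem gen_ext {L : FirstOrder.Language} {M : Type} [L.Structure M] 
    (χ : L.Formula (Fin 1)) (hsm : StronglyMinimalFormula L M χ) {n : ℕ}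
    (v w : Fin n → M) (c d : M)
    (h : ∀ φ : L.Formula (Fin n), φ.Realize v → φ.Realize w)
    (hcX : χ.Realize (fun _ => c)) (hdX : χ.Realize (fun _ => d))
    (hc : ¬ InAcl L M (Set.range v) c) (hd : ¬ InAcl L M (Set.range w) d)
    (φ : L.Formula (Fin n ⊕ Fin 1)) (hφ : φ.Realize (Sum.elim v (fun _ => c))) :
    φ.Realize (Sum.elim w (fun _ => d)) := by
  let χ' : L.Formula (Fin n ⊕ Fin 1) := χ.relabel Sum.inr
  have hχ' : ∀ (u : Fin n → M) (x : M),
      χ'.Realize (Sum.elim u (fun _ => x)) ↔ χ.Realize (fun _ => x) := by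
    intro u x
    rw [Formula.realize_relabel, Sum.elim_comp_inr]
  rcases hsm.2 n φ v with hfin | hfin
  · exact absurd ⟨n, χ' ⊓ φ, v, fun i => ⟨i, rfl⟩,
      by simpa only [Formula.realize_inf, hχ'] using hfin,
      by simpa only [Formula.realize_inf, hχ'] using ⟨hcX, hφ⟩⟩ hc
  · by_contra hn
    refine hd ⟨n, χ' ⊓ ∼φ, w, fun i => ⟨i, rfl⟩, fin_transfer _ v w h ?_, ?_⟩
    · simpa only [Formula.realize_inf, Formula.realize_not, hχ'] using hfin
    · simpa only [Formula.realize_inf, Formula.realize_not, hχ'] using ⟨hdX, hn⟩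

/-- Algebraicity over a single element, by a formula in two variables. -/
theorem acl_single {L : FirstOrder.Language} {M : Type} [L.Structure M] (a c : M)
    (h : InAcl L M {a} c) : ∃ θ : L.Formula (Fin 1 ⊕ Fin 1),
      {x | θ.Realize (Sum.elim (fun _ => a) (fun _ => x))}.Finite ∧
      θ.Realize (Sum.elim (fun _ => a) (fun _ => c)) := by
  obtain ⟨k, φ, p, hp, hf, hc⟩ := h
  have hp' : p = fun _ => a := funext hp
  subst hp'
  refine ⟨φ.relabel (Sum.map (fun _ => 0) id), ?_, ?_⟩
  · simp only [Formula.realize_relabel, Sum.elim_comp_map, Function.comp_id]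
    exact hf
  · simp only [Formula.realize_relabel, Sum.elim_comp_map, Function.comp_id]
    exact hc

def T {L : FirstOrder.Language} {M : Type} [L.Structure M] {n : ℕ} (b : Fin n → M) :
    Set (L.Formula (Fin n)) := {φ | φ.Realize b}

def S (L : FirstOrder.Language) {M : Type} [L.Structure M] (χ : L.Formula (Fin 1))
    {n : ℕ} (a : Fin n → M) : Set (Fin n → M) :=
  {b | (∀ i, χ.Realize (fun _ => b i)) ∧ ∀ (i j : Fin n) (φ : L.Formula (Fin 2)),
          φ.Realize ![a i, a j] → φ.Realize ![b i, b j]}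

theorem pair_transfer {L : FirstOrder.Language} {M : Type} [L.Structure M] {a c b d : M}
    (h : ∀ φ : L.Formula (Fin 2), φ.Realize ![a, c] → φ.Realize ![b, d])
    (φ : L.Formula (Fin 1 ⊕ Fin 1)) (hφ : φ.Realize (Sum.elim (fun _ => a) (fun _ => c))) :
    φ.Realize (Sum.elim (fun _ => b) (fun _ => d)) := by
  have key : ∀ x y : M, (φ.relabel (Sum.elim (fun _ => 0) (fun _ => 1) : Fin 1 ⊕ Fin 1 → Fin 2)).Realize ![x, y]
      ↔ φ.Realize (Sum.elim (fun _ => x) (fun _ => y)) := by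
    intro x y
    rw [Formula.realize_relabel]
    have : (![x, y] ∘ (Sum.elim (fun _ => 0) (fun _ => 1) : Fin 1 ⊕ Fin 1 → Fin 2))
      = Sum.elim (fun _ => x) (fun _ => y) := by
      funext i; rcases i with i | i <;> rfl
    rw [this]
  exact (key b d).1 (h _ ((key a c).2 hφ))

theorem single_transfer {L : FirstOrder.Language} {M : Type} [L.Structure M] {a c b d : M}
    (h : ∀ φ : L.Formula (Fin 2), φ.Realize ![a, c] → φ.Realize ![b, d])
    (φ : L.Formula (Fin 1)) (hφ : φ.Realize (fun _ => a)) : φ.Realize (fun _ => b) := by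
  have := pair_transfer h (φ.relabel Sum.inl)
  simp only [Formula.realize_relabel, Sum.elim_comp_inl] at this
  exact this hφ

theorem acl_transfer {L : FirstOrder.Language} {M : Type} [L.Structure M] {a c b d : M}
    (h : ∀ φ : L.Formula (Fin 2), φ.Realize ![a, c] → φ.Realize ![b, d])
    (hc : InAcl L M {a} c) : InAcl L M {b} d := by
  obtain ⟨θ, hf, hθ⟩ := acl_single a c hc
  exact ⟨1, θ, fun _ => b, fun _ => rfl, fin_transfer θ _ _ (single_transfer h) hf,
    pair_transfer h θ hθ⟩

theorem snoc_eq {M : Type} {n : ℕ} (b : Fin (n + 1) → M) :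
    Sum.elim (fun i : Fin n => b i.castSucc) (fun _ : Fin 1 => b (Fin.last n))
      = b ∘ (finSumFinEquiv : Fin n ⊕ Fin 1 ≃ Fin (n + 1)) := by
  funext i
  rcases i with i | i
  · rfl
  · rw [Subsingleton.elim i 0]; rfl

theorem T_eq_of {L : FirstOrder.Language} {M : Type} [L.Structure M] {n : ℕ}
    (b : Fin (n + 1) → M) (v : Fin n → M) (c : M)
    (h : ∀ φ : L.Formula (Fin n ⊕ Fin 1), φ.Realize (Sum.elim v (fun _ => c)) ↔
      φ.Realize (Sum.elim (fun i : Fin n => b i.castSucc) (fun _ => b (Fin.last n)))) :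
    T (L := L) b = T (L := L) (Sum.elim v (fun _ : Fin 1 => c) ∘
      (finSumFinEquiv : Fin n ⊕ Fin 1 ≃ Fin (n + 1)).symm) := by
  ext φ
  have := h (φ.relabel (finSumFinEquiv : Fin n ⊕ Fin 1 ≃ Fin (n + 1)).symm)
  rw [Formula.realize_relabel, Formula.realize_relabel, snoc_eq, Function.comp_assoc,
    Equiv.self_comp_symm, Function.comp_id] at this
  exact this.symm

theorem finite_types {L : FirstOrder.Language} {M : Type} [L.Structure M]
    (χ : L.Formula (Fin 1))
    (hsm : StronglyMinimalFormula L M χ) (htriv : TrivialFormula L M χ) :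
    ∀ (n : ℕ) (a : Fin n → M), (∀ i, χ.Realize (fun _ => a i)) →
      (T (L := L) '' S L χ a).Finite := by
  intro n
  induction n with
  | zero =>
    intro a _
    refine Set.Subsingleton.finite ?_
    rintro _ ⟨x, _, rfl⟩ _ ⟨y, _, rfl⟩
    rw [Subsingleton.elim x y]
  | succ n ih =>
    intro a ha
    have ih' := ih (fun i => a i.castSucc) (fun i => ha _)
    refine Set.Finite.subset (ih'.biUnion
      (t := fun t => T (L := L) '' {b ∈ S L χ a | T (L := L) (fun i : Fin n => b i.castSucc) = t}) ?_) ?_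
    swap
    · rintro _ ⟨b, hb, rfl⟩
      refine Set.mem_biUnion (x := T (L := L) (fun i : Fin n => b i.castSucc))
        ⟨_, ⟨fun i => hb.1 _, fun i j => hb.2 _ _⟩, rfl⟩ ⟨b, ⟨hb, rfl⟩, rfl⟩
    intro t _
    by_cases hne : ∃ b ∈ S L χ a, T (L := L) (fun i : Fin n => b i.castSucc) = t
    swap
    · refine Set.Subsingleton.finite ?_
      rintro _ ⟨x, hx, rfl⟩
      exact absurd ⟨x, hx⟩ hne
    obtain ⟨b₀, hb₀, rfl⟩ := hne
    set v : Fin n → M := fun i => b₀ i.castSucc with hv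
    have hT : ∀ b : Fin (n + 1) → M, T (L := L) (fun i : Fin n => b i.castSucc) = T (L := L) v →
        ∀ φ : L.Formula (Fin n), φ.Realize (fun i : Fin n => b i.castSucc) ↔ φ.Realize v :=
      fun b hb φ => Set.ext_iff.1 hb φ
    by_cases hacl : InAcl L M (Set.range fun i : Fin n => a i.castSucc) (a (Fin.last n))
    · obtain ⟨_, ⟨i, rfl⟩, hi⟩ := htriv _ (ha _) _ (by rintro _ ⟨i, rfl⟩; exact ha _) hacl
      obtain ⟨θ, hf, hθ⟩ := acl_single _ _ hi
      let ψ : L.Formula (Fin n ⊕ Fin 1) := θ.relabel (Sum.map (fun _ => i) id)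
      have hψ : ∀ (u : Fin n → M) (x : M), ψ.Realize (Sum.elim u (fun _ => x)) ↔
          θ.Realize (Sum.elim (fun _ => u i) (fun _ => x)) := by
        intro u x
        rw [Formula.realize_relabel, Sum.elim_comp_map]; rfl
      have hfin : {x | ψ.Realize (Sum.elim v (fun _ => x))}.Finite := by
        simp only [hψ]
        exact fin_transfer θ _ _ (single_transfer (hb₀.2 i.castSucc (Fin.last n))) hf
      refine (hfin.image (fun c => T (L := L) (Sum.elim v (fun _ : Fin 1 => c) ∘
        (finSumFinEquiv : Fin n ⊕ Fin 1 ≃ Fin (n + 1)).symm))).subset ?_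
      rintro _ ⟨b, ⟨hb, hbt⟩, rfl⟩
      obtain ⟨c, hc, hcφ⟩ := alg_ext ψ v (fun i : Fin n => b i.castSucc) (b (Fin.last n))
        (fun φ => (hT b hbt φ).1) hfin
        ((hψ _ _).2 (pair_transfer (hb.2 i.castSucc (Fin.last n)) θ hθ))
      exact ⟨c, hc, (T_eq_of b v c hcφ).symm⟩
    · have hno : ∀ b ∈ S L χ a,
          ¬ InAcl L M (Set.range fun i : Fin n => b i.castSucc) (b (Fin.last n)) := by
        intro b hb h
        obtain ⟨_, ⟨i, rfl⟩, hi⟩ := htriv _ (hb.1 _) _ (by rintro _ ⟨i, rfl⟩; exact hb.1 _) h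
        have hi' : InAcl L M {a i.castSucc} (a (Fin.last n)) := by
          refine acl_transfer (fun φ hφ => ?_) hi
          by_contra hn
          exact Formula.realize_not.1
            (hb.2 i.castSucc (Fin.last n) (∼φ) (Formula.realize_not.2 hn)) hφ
        obtain ⟨k, φ, p, hp, h⟩ := hi'
        exact hacl ⟨k, φ, p, fun j => ⟨i, (hp j).symm⟩, h⟩
      refine (Set.finite_singleton (T (L := L) (Sum.elim v (fun _ : Fin 1 => b₀ (Fin.last n)) ∘
        (finSumFinEquiv : Fin n ⊕ Fin 1 ≃ Fin (n + 1)).symm))).subset ?_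
      rintro _ ⟨b, ⟨hb, hbt⟩, rfl⟩
      refine T_eq_of b v _ fun φ => ⟨?_, ?_⟩
      · exact gen_ext χ hsm _ _ _ _ (fun φ => (hT b hbt φ).2) (hb₀.1 _) (hb.1 _)
          (hno _ hb₀) (hno _ hb) φ
      · exact gen_ext χ hsm _ _ _ _ (fun φ => (hT b hbt φ).1) (hb.1 _) (hb₀.1 _)
          (hno _ hb) (hno _ hb₀) φ

end TrivSM

theorem trivial_strongly_minimal_types_binary
    (L : FirstOrder.Language) (M : Type) [L.Structure M] [Nonempty M]
    -- M is a saturated model of a complete stable theory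
    (hsat : SaturatedModel L M) (hstable : StableModel L M)
    -- X is a trivial strongly minimal set, defined by the formula χ
    (χ : L.Formula (Fin 1))
    (hsm : StronglyMinimalFormula L M χ) (htriv : TrivialFormula L M χ)
    -- a = (a_1, …, a_n) ∈ X^n
    (n : ℕ) (a : Fin n → M) (ha : ∀ i, χ.Realize (fun _ => a i)) :
    -- the partial type Σ = ⋃_{i,j} tp(a_i, a_j) has only finitely many completions
    -- q_1, …, q_N (each represented by a realizing tuple, as M is saturated):
    ∃ (N : ℕ) (q : Fin N → Fin n → M),
      (∀ ℓ, ∀ i, χ.Realize (fun _ => q ℓ i)) ∧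
      ∀ b : Fin n → M, (∀ i, χ.Realize (fun _ => b i)) →
        -- if b realizes Σ, i.e. every formula true of (a_i, a_j) is true of (b_i, b_j),
        (∀ (i j : Fin n) (φ : L.Formula (Fin 2)),
          φ.Realize ![a i, a j] → φ.Realize ![b i, b j]) →
        -- then b realizes q_ℓ for some ℓ, i.e. tp(b) = tp(q_ℓ)
        ∃ ℓ : Fin N, ∀ φ : L.Formula (Fin n), φ.Realize (q ℓ) ↔ φ.Realize b := by
  have hfin := TrivSM.finite_types χ hsm htriv n a ha
  have : Finite ↥(TrivSM.T (L := L) '' TrivSM.S L χ a) := hfin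
  obtain ⟨N, ⟨e⟩⟩ := Finite.exists_equiv_fin ↥(TrivSM.T (L := L) '' TrivSM.S L χ a)
  choose g hg using fun t : ↥(TrivSM.T (L := L) '' TrivSM.S L χ a) => t.2
  refine ⟨N, fun ℓ => g (e.symm ℓ), fun ℓ => (hg (e.symm ℓ)).1.1, fun b hb hb2 => ?_⟩
  have hbS : b ∈ TrivSM.S L χ a := ⟨hb, hb2⟩
  refine ⟨e ⟨TrivSM.T b, b, hbS, rfl⟩, fun φ => ?_⟩
  have h := (hg (e.symm (e ⟨TrivSM.T b, b, hbS, rfl⟩))).2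
  have h2 : TrivSM.T (L := L) (g (e.symm (e ⟨TrivSM.T b, b, hbS, rfl⟩))) = TrivSM.T b := by
    rw [h, Equiv.symm_apply_apply]
  exact Set.ext_iff.1 h2 φ
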